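/- Let L be an S×S real symmetric positive semidefinite matrix whose kernel (the null space of the linear map x ↦ Lx) is one-dimensional and spanned by a unit vector u₁, let P be a Moore–Penrose pseudoinverse of L, and set W = I − u₁u₁ᵀ. Then for every S×S real symmetric matrix Z and every real number s, the 2S×2S block matrix [[Z + s·I, W], [W, L]] is positive semidefinite if and only if Z + s·I − P is positive semidefinite. -/

import Mathlib

open Matrix

/-!
Since `L` is Hermitian, uniqueness of the pseudoinverse makes `P` Hermitian, and `P * L` is the
orthogonal projection `W` with the same kernel as `L`. So the block matrix is
`[[A, P * L], [L * Pᴴ, L]]` with `A = Z + s • 1`; it is congruent to `diag (A - P * L * Pᴴ, L)`,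
and `P * L * Pᴴ = P * L * P = P`.
-/

/-- `p` is a Moore–Penrose inverse of `a`: the four Penrose equations in a ring with involution,
such as the square matrices over `ℝ` or `ℂ` with the conjugate transpose. -/
structure IsMoorePenroseInverse {R : Type*} [Mul R] [Star R] (a p : R) : Prop where
  mul_mul_self : a * p * a = a
  mul_mul_inverse : p * a * p = p
  isSelfAdjoint_mul_inverse : IsSelfAdjoint (a * p)
  isSelfAdjoint_inverse_mul : IsSelfAdjoint (p * a)

section StarMul

variable {R : Type*}

lemma eq_of_isSelfAdjoint_of_mul_eq_left [Mul R] [StarMul R] {p q : R}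
    (hp : IsSelfAdjoint p) (hq : IsSelfAdjoint q) (hpq : p * q = p) (hqp : q * p = q) : p = q :=
  calc
    p = star (p * q) := by rw [hpq, hp.star_eq]
    _ = q * p := by rw [star_mul, hp.star_eq, hq.star_eq]
    _ = q := hqp

namespace IsMoorePenroseInverse

variable [Semigroup R] [StarMul R] {a p q : R}

protected lemma star (h : IsMoorePenroseInverse a p) : IsMoorePenroseInverse (star a) (star p) where
  mul_mul_self := by rw [mul_assoc, ← star_mul, ← star_mul, h.mul_mul_self]
  mul_mul_inverse := by rw [mul_assoc, ← star_mul, ← star_mul, h.mul_mul_inverse]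
  isSelfAdjoint_mul_inverse := by
    simpa only [star_mul] using IsSelfAdjoint.star_iff.mpr h.isSelfAdjoint_inverse_mul
  isSelfAdjoint_inverse_mul := by
    simpa only [star_mul] using IsSelfAdjoint.star_iff.mpr h.isSelfAdjoint_mul_inverse

lemma isStarProjection_inverse_mul (h : IsMoorePenroseInverse a p) : IsStarProjection (p * a) where
  isIdempotentElem := by rw [IsIdempotentElem, ← mul_assoc, h.mul_mul_inverse]
  isSelfAdjoint := h.isSelfAdjoint_inverse_mul

lemma inverse_mul_eq (hp : IsMoorePenroseInverse a p) (hq : IsMoorePenroseInverse a q) :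
    p * a = q * a :=
  eq_of_isSelfAdjoint_of_mul_eq_left hp.isSelfAdjoint_inverse_mul hq.isSelfAdjoint_inverse_mul
    (by rw [mul_assoc, ← mul_assoc a, hq.mul_mul_self])
    (by rw [mul_assoc, ← mul_assoc a, hp.mul_mul_self])

lemma mul_inverse_eq (hp : IsMoorePenroseInverse a p) (hq : IsMoorePenroseInverse a q) :
    a * p = a * q :=
  star_injective <| by simpa only [star_mul] using hp.star.inverse_mul_eq hq.star

lemma unique (hp : IsMoorePenroseInverse a p) (hq : IsMoorePenroseInverse a q) : p = q :=
  calc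
    p = p * a * p := hp.mul_mul_inverse.symm
    _ = q * (a * p) := by rw [hp.inverse_mul_eq hq, mul_assoc]
    _ = q * a * q := by rw [hp.mul_inverse_eq hq, mul_assoc]
    _ = q := hq.mul_mul_inverse

lemma isSelfAdjoint (h : IsMoorePenroseInverse a p) (ha : IsSelfAdjoint a) : IsSelfAdjoint p :=
  unique (ha.star_eq ▸ h.star) h

end IsMoorePenroseInverse

end StarMul

section Kernel

variable {k l m n R : Type*} [Fintype m]

lemma mul_eq_zero_of_mulVec_eq_zero_imp [NonUnitalNonAssocSemiring R]
    {A : Matrix k m R} {B : Matrix l m R} {C : Matrix m n R}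
    (hAB : ∀ x, A *ᵥ x = 0 → B *ᵥ x = 0) (hAC : A * C = 0) : B * C = 0 := by
  ext i j
  have hA : A *ᵥ C.col j = 0 := funext fun i ↦ congr_fun₂ hAC i j
  exact congr_fun (hAB _ hA) i

lemma IsMoorePenroseInverse.inverse_mul_mulVec_eq_zero_iff [NonUnitalSemiring R] [Star R]
    {L P : Matrix m m R} (h : IsMoorePenroseInverse L P) (x : m → R) :
    (P * L) *ᵥ x = 0 ↔ L *ᵥ x = 0 := by
  constructor <;> intro hx
  · rw [← h.mul_mul_self, mul_assoc, ← mulVec_mulVec, hx, mulVec_zero]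
  · rw [← mulVec_mulVec, hx, mulVec_zero]

lemma mul_eq_left_of_mulVec_eq_zero_imp [Ring R] {B : Matrix l m R} {E : Matrix m m R}
    (hE : IsIdempotentElem E) (hEB : ∀ x, E *ᵥ x = 0 → B *ᵥ x = 0) : B * E = B := by
  classical
  have hB : B * (1 - E) = 0 := mul_eq_zero_of_mulVec_eq_zero_imp hEB hE.mul_one_sub_self
  rwa [Matrix.mul_sub, Matrix.mul_one, sub_eq_zero, eq_comm] at hB

lemma eq_of_isStarProjection_of_mulVec_eq_zero_iff [Ring R] [StarRing R] {E F : Matrix m m R}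
    (hE : IsStarProjection E) (hF : IsStarProjection F)
    (hEF : ∀ x, E *ᵥ x = 0 ↔ F *ᵥ x = 0) : E = F :=
  eq_of_isSelfAdjoint_of_mul_eq_left hE.isSelfAdjoint hF.isSelfAdjoint
    (mul_eq_left_of_mulVec_eq_zero_imp hF.isIdempotentElem fun x ↦ (hEF x).mpr)
    (mul_eq_left_of_mulVec_eq_zero_imp hE.isIdempotentElem fun x ↦ (hEF x).mp)

end Kernel

section UnitVector

variable {m n R : Type*} [Fintype n]

lemma isStarProjection_vecMulVec_star [Semiring R] [StarRing R] {u : n → R}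
    (hu : star u ⬝ᵥ u = 1) : IsStarProjection (vecMulVec u (star u)) where
  isIdempotentElem := by
    rw [IsIdempotentElem, vecMulVec_mul_vecMulVec, hu, one_smul]
  isSelfAdjoint := by
    rw [IsSelfAdjoint, star_eq_conjTranspose, conjTranspose_vecMulVec, star_star]

lemma one_sub_vecMulVec_star_mulVec_eq_zero_iff [DecidableEq n] [CommRing R] [StarRing R]
    {L : Matrix m n R} {u : n → R} (hu : star u ⬝ᵥ u = 1) (hLu : L *ᵥ u = 0)
    (hker : ∀ x, L *ᵥ x = 0 → ∃ c : R, x = c • u) (x : n → R) :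
    (1 - vecMulVec u (star u)) *ᵥ x = 0 ↔ L *ᵥ x = 0 := by
  rw [sub_mulVec, one_mulVec, vecMulVec_mulVec, op_smul_eq_smul, sub_eq_zero]
  constructor <;> intro hx
  · rw [hx, mulVec_smul, hLu, smul_zero]
  · obtain ⟨c, rfl⟩ := hker x hx
    rw [dotProduct_smul, hu, smul_eq_mul, mul_one]

end UnitVector

section SchurComplement

variable {m n R : Type*} [Finite m] [Fintype n] [Ring R] [PartialOrder R] [StarRing R]
  [AddLeftMono R]

/-- For invertible `C` and `B = X * C`, the matrix on the right is the usual Schur complement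
`A - B * C⁻¹ * Bᴴ`; this form also covers singular `C`. -/
lemma posSemidef_fromBlocks_mul_iff {A : Matrix m m R} {X : Matrix m n R} {C : Matrix n n R}
    (hC : C.PosSemidef) :
    (fromBlocks A (X * C) (C * Xᴴ) C).PosSemidef ↔ (A - X * C * Xᴴ).PosSemidef := by
  classical
  have := Fintype.ofFinite m
  constructor <;> intro h
  · let V : Matrix m (m ⊕ n) R := fromCols 1 (-X)
    have hcompress : V * fromBlocks A (X * C) (C * Xᴴ) C * Vᴴ = A - X * C * Xᴴ := by
      simp [V, conjTranspose_fromCols_eq_fromRows_conjTranspose, fromCols_mul_fromBlocks,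
        fromCols_mul_fromRows, Matrix.mul_assoc, sub_eq_add_neg]
    exact hcompress ▸ h.mul_mul_conjTranspose_same V
  · let T : Matrix (m ⊕ n) m R := fromRows 1 0
    let Y : Matrix (m ⊕ n) n R := fromRows X 1
    have hsplit : T * (A - X * C * Xᴴ) * Tᴴ + Y * C * Yᴴ = fromBlocks A (X * C) (C * Xᴴ) C := by
      simp only [T, Y, conjTranspose_fromRows_eq_fromCols_conjTranspose, fromRows_mul,
        mul_fromCols, fromCols_fromRows_eq_fromBlocks, fromBlocks_add]
      simp
    exact hsplit ▸ (h.mul_mul_conjTranspose_same T).add (hC.mul_mul_conjTranspose_same Y)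

theorem block_lmi_iff_psd_general {L P W : Matrix n n R} (hL : L.PosSemidef)
    (hP : IsMoorePenroseInverse L P) (hW : IsStarProjection W)
    (hker : ∀ x, W *ᵥ x = 0 ↔ L *ᵥ x = 0) (A : Matrix n n R) :
    (fromBlocks A W W L).PosSemidef ↔ (A - P).PosSemidef := by
  have hPL : P * L = W := eq_of_isStarProjection_of_mulVec_eq_zero_iff
    hP.isStarProjection_inverse_mul hW fun x ↦
      (hP.inverse_mul_mulVec_eq_zero_iff x).trans (hker x).symm
  have hLPH : L * Pᴴ = W := by
    rw [← hW.isSelfAdjoint.star_eq, ← hPL, star_eq_conjTranspose, conjTranspose_mul,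
      hL.isHermitian.eq]
  have hPLPH : P * L * Pᴴ = P := by
    rw [← star_eq_conjTranspose, (hP.isSelfAdjoint hL.isHermitian).star_eq, hP.mul_mul_inverse]
  have hschur := posSemidef_fromBlocks_mul_iff (A := A) (X := P) hL
  rwa [hPLPH, hPL, hLPH] at hschur

end SchurComplement

/-- The LMI constraint of Lemma 1: with `W = I − u₁u₁ᵀ`, the block matrix
`[[Z + s I, W], [W, L]]` is PSD if and only if `Z + s I − L† ⪰ 0`, where `P = L†`
is the Moore–Penrose pseudoinverse of `L`. -/
theorem block_lmi_iff_psd (S : ℕ)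
    (L : Matrix (Fin S) (Fin S) ℝ) (hL : L.PosSemidef)
    (u₁ : Fin S → ℝ) (hu : ∑ i, u₁ i ^ 2 = 1)
    (hker₁ : L.mulVec u₁ = 0)
    (hker : ∀ x, L.mulVec x = 0 → ∃ c : ℝ, x = c • u₁)
    (P : Matrix (Fin S) (Fin S) ℝ)
    (hP1 : L * P * L = L) (hP2 : P * L * P = P)
    (hP3 : (L * P)ᵀ = L * P) (hP4 : (P * L)ᵀ = P * L) :
    ∀ (Z : Matrix (Fin S) (Fin S) ℝ), Z.IsSymm → ∀ s : ℝ,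
      ((Matrix.fromBlocks (Z + s • (1 : Matrix (Fin S) (Fin S) ℝ))
          (1 - Matrix.vecMulVec u₁ u₁) (1 - Matrix.vecMulVec u₁ u₁) L).PosSemidef ↔
        (Z + s • (1 : Matrix (Fin S) (Fin S) ℝ) - P).PosSemidef) := by
  intro Z _ s
  have hunit : star u₁ ⬝ᵥ u₁ = 1 := by simpa [dotProduct, ← sq] using hu
  exact block_lmi_iff_psd_general hL ⟨hP1, hP2, hP3, hP4⟩
    (isStarProjection_vecMulVec_star hunit).one_sub
    (one_sub_vecMulVec_star_mulVec_eq_zero_iff hunit hker₁ hker) _
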